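/- Along the cycle chart, the v-derivatives at v = 0 of the second fundamental form coefficients relative to N₂ satisfy, for every u: ∂e₂/∂v(u,0) = −k_g(u)(k_B(u) + K̄(u)) − τ_N(u)τ_B(u) − τ'(u), ∂f₂/∂v(u,0) = K̄'(u) + K(u)τ_B(u) − k_g(u)τ(u), and ∂g₂/∂v(u,0) = b(u). -/

import Mathlib

/-! The derivative at `v = 0` of a second fundamental form coefficient `⟪α_xy, N₂⟫` is
`⟪∂_v α_xy, B⟫ + ⟪α_xy, ∂_v N₂⟫`, since `N₂ = B` along the curve. Two computations therefore suffice.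

* The jets of `α`. Writing `α = c + v T + v² Q` with `Q` smooth gives `α_v = T`,
  `α_vv = K N + K̄ B` and `α_vvv = a N + b B` at `v = 0` (`pdv_normal_form` and its iterates);
  mixed derivatives follow from the symmetry of second derivatives (`pdv_pdu_comm`) by
  differentiating these expressions along the curve.
* The vector `∂_v N₂`. It is never computed from the quotient defining `N₂`: differentiating the
  identities `⟪N₂, α_u⟫ = ⟪N₂, α_v⟫ = ⟪N₂, B̄₁⟫ = 0` and `⟪N₂, N₂⟫ = 1` determines its components in
  the Darboux frame, namely `∂_v N₂ = τ t − K̄ T` at `v = 0`. The third identity uses that `B̄₁`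
  has no `B`-component. -/

noncomputable section

open scoped RealInnerProductSpace

abbrev E4 : Type := EuclideanSpace ℝ (Fin 4)

/-- Partial derivative with respect to the first variable `u`. -/
def pdu {X : Type*} [NormedAddCommGroup X] [NormedSpace ℝ X]
    (f : ℝ × ℝ → X) (p : ℝ × ℝ) : X := fderiv ℝ f p (1, 0)

/-- Partial derivative with respect to the second variable `v`. -/
def pdv {X : Type*} [NormedAddCommGroup X] [NormedSpace ℝ X]
    (f : ℝ × ℝ → X) (p : ℝ × ℝ) : X := fderiv ℝ f p (0, 1)

/-- The wedge `x ∧ y ∧ z` of three vectors of `ℝ⁴`: the unique vector satisfying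
`⟪x ∧ y ∧ z, w⟫ = det (x, y, z, w)` for all `w ∈ ℝ⁴`. -/
def wedge (x y z : E4) : E4 :=
  (WithLp.equiv 2 (Fin 4 → ℝ)).symm fun i =>
    Matrix.det (Matrix.of ![(x : Fin 4 → ℝ), y, z, fun j => if j = i then 1 else 0])

namespace Cycle

/-- Coefficient `E` of the first fundamental form. -/
def Ec (α : ℝ × ℝ → E4) (p : ℝ × ℝ) : ℝ := ⟪pdu α p, pdu α p⟫
/-- Coefficient `F` of the first fundamental form. -/
def Fc (α : ℝ × ℝ → E4) (p : ℝ × ℝ) : ℝ := ⟪pdu α p, pdv α p⟫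
/-- Coefficient `G` of the first fundamental form. -/
def Gc (α : ℝ × ℝ → E4) (p : ℝ × ℝ) : ℝ := ⟪pdv α p, pdv α p⟫

/-- `x₁ = ⟨α_u, t⟩`. -/
def x1 (α : ℝ × ℝ → E4) (t : ℝ → E4) (p : ℝ × ℝ) : ℝ := ⟪pdu α p, t p.1⟫
/-- `x₂ = ⟨α_u, T⟩`. -/
def x2 (α : ℝ × ℝ → E4) (T : ℝ → E4) (p : ℝ × ℝ) : ℝ := ⟪pdu α p, T p.1⟫
/-- `x₃ = ⟨α_u, N⟩`. -/
def x3 (α : ℝ × ℝ → E4) (N : ℝ → E4) (p : ℝ × ℝ) : ℝ := ⟪pdu α p, N p.1⟫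
/-- `y₁ = ⟨α_v, N⟩`. -/
def y1 (α : ℝ × ℝ → E4) (N : ℝ → E4) (p : ℝ × ℝ) : ℝ := ⟪pdv α p, N p.1⟫

/-- `B̄₁ = (y₁x₂ − x₃)t − x₁y₁T + x₁N`. -/
def Bb1 (α : ℝ × ℝ → E4) (t T N : ℝ → E4) (p : ℝ × ℝ) : E4 :=
  (y1 α N p * x2 α T p - x3 α N p) • t p.1 - (x1 α t p * y1 α N p) • T p.1 + x1 α t p • N p.1

/-- `B̄₂ = α_u ∧ α_v ∧ B̄₁`. -/
def Bb2 (α : ℝ × ℝ → E4) (t T N : ℝ → E4) (p : ℝ × ℝ) : E4 :=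
  wedge (pdu α p) (pdv α p) (Bb1 α t T N p)

/-- `N₁ = B̄₁/|B̄₁|`. -/
def N1 (α : ℝ × ℝ → E4) (t T N : ℝ → E4) (p : ℝ × ℝ) : E4 :=
  ‖Bb1 α t T N p‖⁻¹ • Bb1 α t T N p

/-- `N₂ = B̄₂/|B̄₂|`. -/
def N2 (α : ℝ × ℝ → E4) (t T N : ℝ → E4) (p : ℝ × ℝ) : E4 :=
  ‖Bb2 α t T N p‖⁻¹ • Bb2 α t T N p

def e1 (α : ℝ × ℝ → E4) (t T N : ℝ → E4) (p : ℝ × ℝ) : ℝ := ⟪pdu (pdu α) p, N1 α t T N p⟫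
def f1 (α : ℝ × ℝ → E4) (t T N : ℝ → E4) (p : ℝ × ℝ) : ℝ := ⟪pdv (pdu α) p, N1 α t T N p⟫
def g1 (α : ℝ × ℝ → E4) (t T N : ℝ → E4) (p : ℝ × ℝ) : ℝ := ⟪pdv (pdv α) p, N1 α t T N p⟫
def e2 (α : ℝ × ℝ → E4) (t T N : ℝ → E4) (p : ℝ × ℝ) : ℝ := ⟪pdu (pdu α) p, N2 α t T N p⟫
def f2 (α : ℝ × ℝ → E4) (t T N : ℝ → E4) (p : ℝ × ℝ) : ℝ := ⟪pdv (pdu α) p, N2 α t T N p⟫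
def g2 (α : ℝ × ℝ → E4) (t T N : ℝ → E4) (p : ℝ × ℝ) : ℝ := ⟪pdv (pdv α) p, N2 α t T N p⟫

/-- `H̃₁ = (E g₁ − 2F f₁ + G e₁)/(2(EG − F²))`. -/
def Ht1 (α : ℝ × ℝ → E4) (t T N : ℝ → E4) (p : ℝ × ℝ) : ℝ :=
  (Ec α p * g1 α t T N p - 2 * Fc α p * f1 α t T N p + Gc α p * e1 α t T N p) /
    (2 * (Ec α p * Gc α p - Fc α p ^ 2))

/-- `H̃₂ = (E g₂ − 2F f₂ + G e₂)/(2(EG − F²))`. -/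
def Ht2 (α : ℝ × ℝ → E4) (t T N : ℝ → E4) (p : ℝ × ℝ) : ℝ :=
  (Ec α p * g2 α t T N p - 2 * Fc α p * f2 α t T N p + Gc α p * e2 α t T N p) /
    (2 * (Ec α p * Gc α p - Fc α p ^ 2))

/-- The mean curvature vector `H = H̃₁N₁ + H̃₂N₂`. -/
def Hvec (α : ℝ × ℝ → E4) (t T N : ℝ → E4) (p : ℝ × ℝ) : E4 :=
  Ht1 α t T N p • N1 α t T N p + Ht2 α t T N p • N2 α t T N p

def eH (α : ℝ × ℝ → E4) (t T N : ℝ → E4) (p : ℝ × ℝ) : ℝ := ⟪pdu (pdu α) p, Hvec α t T N p⟫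
def fH (α : ℝ × ℝ → E4) (t T N : ℝ → E4) (p : ℝ × ℝ) : ℝ := ⟪pdv (pdu α) p, Hvec α t T N p⟫
def gH (α : ℝ × ℝ → E4) (t T N : ℝ → E4) (p : ℝ × ℝ) : ℝ := ⟪pdv (pdv α) p, Hvec α t T N p⟫

end Cycle

open Cycle

/-! ### Partial derivatives of smooth maps on the plane -/

section Partials

variable {X : Type*} [NormedAddCommGroup X] [NormedSpace ℝ X]

lemma contDiff_pdu {f : ℝ × ℝ → X} (hf : ContDiff ℝ (⊤ : ℕ∞) f) :
    ContDiff ℝ (⊤ : ℕ∞) (pdu f) :=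
  (hf.fderiv_right (m := (⊤ : ℕ∞)) (by simp)).clm_apply contDiff_const

lemma contDiff_pdv {f : ℝ × ℝ → X} (hf : ContDiff ℝ (⊤ : ℕ∞) f) :
    ContDiff ℝ (⊤ : ℕ∞) (pdv f) :=
  (hf.fderiv_right (m := (⊤ : ℕ∞)) (by simp)).clm_apply contDiff_const

lemma smooth_differentiable {Y : Type*} [NormedAddCommGroup Y] [NormedSpace ℝ Y] {f : Y → X}
    (hf : ContDiff ℝ (⊤ : ℕ∞) f) : Differentiable ℝ f :=
  hf.differentiable (by simp)

lemma hasDerivAt_pdv {f : ℝ × ℝ → X} {u v : ℝ} (hf : DifferentiableAt ℝ f (u, v)) :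
    HasDerivAt (fun s => f (u, s)) (pdv f (u, v)) v :=
  hf.hasFDerivAt.comp_hasDerivAt v ((hasDerivAt_const v u).prodMk (hasDerivAt_id v))

lemma hasDerivAt_pdu {f : ℝ × ℝ → X} {u v : ℝ} (hf : DifferentiableAt ℝ f (u, v)) :
    HasDerivAt (fun s => f (s, v)) (pdu f (u, v)) u :=
  hf.hasFDerivAt.comp_hasDerivAt u ((hasDerivAt_id u).prodMk (hasDerivAt_const u v))

/-- Symmetry of the second derivative. -/
lemma pdv_pdu_comm {f : ℝ × ℝ → X} (hf : ContDiff ℝ (⊤ : ℕ∞) f) :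
    pdv (pdu f) = pdu (pdv f) := by
  funext p
  have hd : DifferentiableAt ℝ (fderiv ℝ f) p :=
    smooth_differentiable (hf.fderiv_right (m := (⊤ : ℕ∞)) (by simp)) p
  have hs : IsSymmSndFDerivAt ℝ f p :=
    hf.contDiffAt.isSymmSndFDerivAt (by
      rw [minSmoothness_of_isRCLikeNormedField]
      exact WithTop.coe_le_coe.2 le_top)
  have h1 : pdv (pdu f) p = fderiv ℝ (fderiv ℝ f) p (0, 1) (1, 0) := by
    unfold pdv pdu
    rw [fderiv_clm_apply hd (by fun_prop)]
    simp
  have h2 : pdu (pdv f) p = fderiv ℝ (fderiv ℝ f) p (1, 0) (0, 1) := by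
    unfold pdv pdu
    rw [fderiv_clm_apply hd (by fun_prop)]
    simp
  rw [h1, h2]
  exact hs _ _

/-- The partial derivative along the curve `v = 0` only depends on the restriction to it. -/
lemma pdu_eq_deriv {f : ℝ × ℝ → X} (hf : ContDiff ℝ (⊤ : ℕ∞) f) {g : ℝ → X}
    (h : ∀ u, f (u, 0) = g u) (u : ℝ) : pdu f (u, 0) = deriv g u := by
  have := (hasDerivAt_pdu (smooth_differentiable hf (u, 0))).deriv
  simp only [h] at this
  exact this.symm

/-- `∂_v` of `P + v R + v² Q`, with `P`, `R` independent of `v`. -/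
lemma pdv_normal_form {P R : ℝ → X} {Q f : ℝ × ℝ → X} (hQ : ContDiff ℝ (⊤ : ℕ∞) Q)
    (hf : ContDiff ℝ (⊤ : ℕ∞) f)
    (h : ∀ u v, f (u, v) = P u + v • R u + v ^ 2 • Q (u, v)) (u v : ℝ) :
    pdv f (u, v) = R u + (2 * v) • Q (u, v) + v ^ 2 • pdv Q (u, v) := by
  have h1 := hasDerivAt_pdv (smooth_differentiable hf (u, v))
  have hq := hasDerivAt_pdv (smooth_differentiable hQ (u, v))
  simp only [h] at h1
  have h2 := (((hasDerivAt_id v).smul_const (R u)).const_add (P u)).add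
    ((hasDerivAt_pow 2 v).smul hq)
  refine (h1.unique h2).trans ?_
  simp
  abel

lemma pdv_pdv_normal_form {P R : ℝ → X} {Q f : ℝ × ℝ → X} (hQ : ContDiff ℝ (⊤ : ℕ∞) Q)
    (hf : ContDiff ℝ (⊤ : ℕ∞) f)
    (h : ∀ u v, f (u, v) = P u + v • R u + v ^ 2 • Q (u, v)) (u v : ℝ) :
    pdv (pdv f) (u, v) =
      (2 : ℝ) • Q (u, v) + (4 * v) • pdv Q (u, v) + v ^ 2 • pdv (pdv Q) (u, v) := by
  have h1 := hasDerivAt_pdv (smooth_differentiable (contDiff_pdv hf) (u, v))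
  have hq := hasDerivAt_pdv (smooth_differentiable hQ (u, v))
  have hq' := hasDerivAt_pdv (smooth_differentiable (contDiff_pdv hQ) (u, v))
  simp only [pdv_normal_form hQ hf h] at h1
  have h2 := ((((hasDerivAt_id v).const_mul 2).smul hq).const_add (R u)).add
    ((hasDerivAt_pow 2 v).smul hq')
  refine (h1.unique h2).trans ?_
  simp
  module

lemma pdv_pdv_pdv_normal_form {P R : ℝ → X} {Q f : ℝ × ℝ → X} (hQ : ContDiff ℝ (⊤ : ℕ∞) Q)
    (hf : ContDiff ℝ (⊤ : ℕ∞) f)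
    (h : ∀ u v, f (u, v) = P u + v • R u + v ^ 2 • Q (u, v)) (u : ℝ) :
    pdv (pdv (pdv f)) (u, 0) = (6 : ℝ) • pdv Q (u, 0) := by
  have h1 := hasDerivAt_pdv (smooth_differentiable (contDiff_pdv (contDiff_pdv hf)) (u, 0))
  have hq := hasDerivAt_pdv (smooth_differentiable hQ (u, 0))
  have hq' := hasDerivAt_pdv (smooth_differentiable (contDiff_pdv hQ) (u, 0))
  have hq'' := hasDerivAt_pdv
    (smooth_differentiable (contDiff_pdv (contDiff_pdv hQ)) (u, 0))
  simp only [pdv_pdv_normal_form hQ hf h] at h1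
  have h2 := ((hq.const_smul (2 : ℝ)).add (((hasDerivAt_id (0 : ℝ)).const_mul 4).smul hq')).add
    ((hasDerivAt_pow 2 (0 : ℝ)).smul hq'')
  refine (h1.unique h2).trans ?_
  simp
  module

lemma pdv_comp_fst {f : ℝ → X} (hf : Differentiable ℝ f) (p : ℝ × ℝ) :
    pdv (fun q : ℝ × ℝ => f q.1) p = 0 := by
  have h := hasDerivAt_pdv (f := fun q : ℝ × ℝ => f q.1) (u := p.1) (v := p.2)
    (by fun_prop)
  exact h.unique (hasDerivAt_const p.2 (f p.1))

end Partials

lemma pdv_inner {f g : ℝ × ℝ → E4} {p : ℝ × ℝ} (hf : DifferentiableAt ℝ f p)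
    (hg : DifferentiableAt ℝ g p) :
    pdv (fun q => (⟪f q, g q⟫ : ℝ)) p = ⟪f p, pdv g p⟫ + ⟪pdv f p, g p⟫ :=
  fderiv_inner_apply ℝ hf hg _

lemma pdv_eq_of_eventually_const {f : ℝ × ℝ → ℝ} {p : ℝ × ℝ} {r : ℝ}
    (h : ∀ᶠ q in nhds p, f q = r) : pdv f p = 0 := by
  have : f =ᶠ[nhds p] fun _ => r := h
  unfold pdv
  rw [this.fderiv_eq]
  simp

/-! ### The wedge product and orthonormal frames of `ℝ⁴` -/

/-- The defining property of the wedge product. -/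
lemma inner_wedge (x y z w : E4) :
    ⟪wedge x y z, w⟫ = Matrix.det (Matrix.of ![(x : Fin 4 → ℝ), y, z, w]) := by
  simp [wedge, PiLp.inner_apply, Matrix.det_succ_row_zero, Fin.sum_univ_succ,
    Fin.succAbove]
  ring

lemma wedge_orth_left (x y z : E4) : ⟪wedge x y z, x⟫ = (0 : ℝ) := by
  rw [inner_wedge]
  exact Matrix.det_zero_of_row_eq (i := 0) (j := 3) (by decide) rfl

lemma wedge_orth_mid (x y z : E4) : ⟪wedge x y z, y⟫ = (0 : ℝ) := by
  rw [inner_wedge]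
  exact Matrix.det_zero_of_row_eq (i := 1) (j := 3) (by decide) rfl

lemma wedge_orth_right (x y z : E4) : ⟪wedge x y z, z⟫ = (0 : ℝ) := by
  rw [inner_wedge]
  exact Matrix.det_zero_of_row_eq (i := 2) (j := 3) (by decide) rfl

lemma contDiff_wedge {f g h : ℝ × ℝ → E4} (hf : ContDiff ℝ (⊤ : ℕ∞) f)
    (hg : ContDiff ℝ (⊤ : ℕ∞) g) (hh : ContDiff ℝ (⊤ : ℕ∞) h) :
    ContDiff ℝ (⊤ : ℕ∞) (fun p => wedge (f p) (g p) (h p)) := by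
  have hf' := contDiff_euclidean.1 hf
  have hg' := contDiff_euclidean.1 hg
  have hh' := contDiff_euclidean.1 hh
  rw [contDiff_euclidean]
  intro i
  simp only [wedge, WithLp.equiv_symm_apply, Matrix.det_apply]
  refine ContDiff.sum fun σ _ => ContDiff.const_smul _ (contDiff_prod fun j _ => ?_)
  generalize σ j = r
  fin_cases r
  · exact hf' j
  · exact hg' j
  · exact hh' j
  · exact contDiff_const (c := if j = i then (1 : ℝ) else 0)

/-- Four orthonormal vectors of `ℝ⁴` separate vectors through inner products. -/
lemma ext_frame {t T N B : E4}
    (h : (⟪t, t⟫ : ℝ) = 1 ∧ (⟪T, T⟫ : ℝ) = 1 ∧ (⟪N, N⟫ : ℝ) = 1 ∧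
      (⟪B, B⟫ : ℝ) = 1 ∧ (⟪t, T⟫ : ℝ) = 0 ∧ (⟪t, N⟫ : ℝ) = 0 ∧ (⟪t, B⟫ : ℝ) = 0 ∧
      (⟪T, N⟫ : ℝ) = 0 ∧ (⟪T, B⟫ : ℝ) = 0 ∧ (⟪N, B⟫ : ℝ) = 0) {x y : E4}
    (h1 : (⟪x, t⟫ : ℝ) = ⟪y, t⟫) (h2 : (⟪x, T⟫ : ℝ) = ⟪y, T⟫)
    (h3 : (⟪x, N⟫ : ℝ) = ⟪y, N⟫) (h4 : (⟪x, B⟫ : ℝ) = ⟪y, B⟫) : x = y := by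
  obtain ⟨a1, a2, a3, a4, b1, b2, b3, b4, b5, b6⟩ := h
  have ho : Orthonormal ℝ ![t, T, N, B] := by
    rw [orthonormal_iff_ite]
    intro i j
    fin_cases i <;> fin_cases j <;> first
      | assumption
      | (rw [real_inner_comm]; assumption)
  have hc : Fintype.card (Fin 4) = Module.finrank ℝ E4 := by simp
  refine InnerProductSpace.ext_inner_right_basis
    (basisOfOrthonormalOfCardEqFinrank ho hc) fun i => ?_
  fin_cases i <;> simpa

lemma wedge_frame {t T N B : E4}
    (h : (⟪t, t⟫ : ℝ) = 1 ∧ (⟪T, T⟫ : ℝ) = 1 ∧ (⟪N, N⟫ : ℝ) = 1 ∧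
      (⟪B, B⟫ : ℝ) = 1 ∧ (⟪t, T⟫ : ℝ) = 0 ∧ (⟪t, N⟫ : ℝ) = 0 ∧ (⟪t, B⟫ : ℝ) = 0 ∧
      (⟪T, N⟫ : ℝ) = 0 ∧ (⟪T, B⟫ : ℝ) = 0 ∧ (⟪N, B⟫ : ℝ) = 0)
    (hd : Matrix.det (Matrix.of ![(t : Fin 4 → ℝ), T, N, B]) = 1) : wedge t T N = B := by
  refine ext_frame h ?_ ?_ ?_ ?_
  · rw [wedge_orth_left, real_inner_comm]; exact h.2.2.2.2.2.2.1.symm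
  · rw [wedge_orth_mid, real_inner_comm]; exact h.2.2.2.2.2.2.2.2.1.symm
  · rw [wedge_orth_right, real_inner_comm]; exact h.2.2.2.2.2.2.2.2.2.symm
  · rw [inner_wedge, hd]; exact h.2.2.2.1.symm

/-! ### The cycle chart -/

/-- `v`-derivatives at `v = 0` of the second fundamental form coefficients
relative to `N₂`: `(e₂)_v = −k_g(k_B + K̄) − τ_Nτ_B − τ'`, `(f₂)_v = K̄' + Kτ_B − k_gτ`,
`(g₂)_v = b`. -/
theorem stmt14
    (L : ℝ) (hL : 0 < L)
    (t T N B c : ℝ → E4) (kg k kB τN τ τB K Kb a b : ℝ → ℝ) (A Ab : ℝ × ℝ → ℝ)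
    (htsm : ContDiff ℝ (⊤ : ℕ∞) t) (hTsm : ContDiff ℝ (⊤ : ℕ∞) T) (hNsm : ContDiff ℝ (⊤ : ℕ∞) N)
    (hBsm : ContDiff ℝ (⊤ : ℕ∞) B) (hcsm : ContDiff ℝ (⊤ : ℕ∞) c)
    (hkgsm : ContDiff ℝ (⊤ : ℕ∞) kg) (hksm : ContDiff ℝ (⊤ : ℕ∞) k) (hkBsm : ContDiff ℝ (⊤ : ℕ∞) kB)
    (hτNsm : ContDiff ℝ (⊤ : ℕ∞) τN) (hτsm : ContDiff ℝ (⊤ : ℕ∞) τ) (hτBsm : ContDiff ℝ (⊤ : ℕ∞) τB)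
    (hKsm : ContDiff ℝ (⊤ : ℕ∞) K) (hKbsm : ContDiff ℝ (⊤ : ℕ∞) Kb) (hasm : ContDiff ℝ (⊤ : ℕ∞) a)
    (hbsm : ContDiff ℝ (⊤ : ℕ∞) b) (hAsm : ContDiff ℝ (⊤ : ℕ∞) A) (hAbsm : ContDiff ℝ (⊤ : ℕ∞) Ab)
    (htper : Function.Periodic t L) (hTper : Function.Periodic T L)
    (hNper : Function.Periodic N L) (hBper : Function.Periodic B L)
    (hcper : Function.Periodic c L)
    (hkgper : Function.Periodic kg L) (hkper : Function.Periodic k L)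
    (hkBper : Function.Periodic kB L) (hτNper : Function.Periodic τN L)
    (hτper : Function.Periodic τ L) (hτBper : Function.Periodic τB L)
    (hKper : Function.Periodic K L) (hKbper : Function.Periodic Kb L)
    (haper : Function.Periodic a L) (hbper : Function.Periodic b L)
    (hAper : ∀ u v : ℝ, A (u + L, v) = A (u, v)) (hAbper : ∀ u v : ℝ, Ab (u + L, v) = Ab (u, v))
    (hortho : ∀ u : ℝ, ⟪t u, t u⟫ = 1 ∧ ⟪T u, T u⟫ = 1 ∧ ⟪N u, N u⟫ = 1 ∧
      ⟪B u, B u⟫ = 1 ∧ ⟪t u, T u⟫ = 0 ∧ ⟪t u, N u⟫ = 0 ∧ ⟪t u, B u⟫ = 0 ∧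
      ⟪T u, N u⟫ = 0 ∧ ⟪T u, B u⟫ = 0 ∧ ⟪N u, B u⟫ = 0)
    (hdet : ∀ u : ℝ, Matrix.det (Matrix.of ![(t u : Fin 4 → ℝ), T u, N u, B u]) = 1)
    (hDt : ∀ u : ℝ, deriv t u = kg u • T u + k u • N u + kB u • B u)
    (hDT : ∀ u : ℝ, deriv T u = -(kg u) • t u - τN u • N u - τ u • B u)
    (hDN : ∀ u : ℝ, deriv N u = -(k u) • t u + τN u • T u + τB u • B u)
    (hDB : ∀ u : ℝ, deriv B u = -(kB u) • t u + τ u • T u - τB u • N u)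
    (hct : ∀ u : ℝ, deriv c u = t u)
    (hA0 : ∀ u : ℝ, A (u, 0) = 0) (hAb0 : ∀ u : ℝ, Ab (u, 0) = 0)
    (α : ℝ × ℝ → E4)
    (hα : ∀ u v : ℝ, α (u, v) = c u + v • T u +
      (K u * v ^ 2 / 2 + a u * v ^ 3 / 6 + v ^ 3 * A (u, v)) • N u +
      (Kb u * v ^ 2 / 2 + b u * v ^ 3 / 6 + v ^ 3 * Ab (u, v)) • B u) :
    ∀ u : ℝ,
      pdv (e2 α t T N) (u, 0) = -kg u * (kB u + Kb u) - τN u * τB u - deriv τ u ∧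
      pdv (f2 α t T N) (u, 0) = deriv Kb u + K u * τB u - kg u * τ u ∧
      pdv (g2 α t T N) (u, 0) = b u := by
  intro u
  have hO := hortho u
  obtain ⟨tt, TT, NN, BB, tT, tN, tB, TN, TB, NB⟩ := hortho u
  -- `α = c + v T + v² Q`
  let Q : ℝ × ℝ → E4 := fun p =>
    (K p.1 / 2 + a p.1 * p.2 / 6 + p.2 * A p) • N p.1 +
      (Kb p.1 / 2 + b p.1 * p.2 / 6 + p.2 * Ab p) • B p.1
  have hQsm : ContDiff ℝ (⊤ : ℕ∞) Q := by
    simp only [Q]; fun_prop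
  have hαQ : ∀ u v, α (u, v) = c u + v • T u + v ^ 2 • Q (u, v) := by
    intro u v
    rw [hα]
    simp only [Q]
    module
  have hαsm : ContDiff ℝ (⊤ : ℕ∞) α := by
    have : α = fun p => c p.1 + p.2 • T p.1 + p.2 ^ 2 • Q p := funext fun p => hαQ p.1 p.2
    rw [this]; fun_prop
  have hu_sm := contDiff_pdu hαsm
  have hv_sm := contDiff_pdv hαsm
  have hαu : ∀ u, pdu α (u, 0) = t u := fun u => by
    rw [pdu_eq_deriv hαsm (g := c) (fun u => by simp [hαQ]), hct]
  have hαv : ∀ u, pdv α (u, 0) = T u := fun u => by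
    simp [pdv_normal_form hQsm hαsm hαQ]
  have hαvv : ∀ u, pdv (pdv α) (u, 0) = K u • N u + Kb u • B u := fun u => by
    rw [pdv_pdv_normal_form hQsm hαsm hαQ]
    simp [Q]
    module
  have hQv : pdv Q (u, 0) = (a u / 6) • N u + (b u / 6) • B u := by
    have hA := hasDerivAt_pdv (smooth_differentiable hAsm (u, 0))
    have hAb := hasDerivAt_pdv (smooth_differentiable hAbsm (u, 0))
    have id0 := hasDerivAt_id (0 : ℝ)
    have h := (((((id0.const_mul (a u)).div_const 6).const_add (K u / 2)).add
      (id0.mul hA)).smul_const (N u)).add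
      (((((id0.const_mul (b u)).div_const 6).const_add (Kb u / 2)).add
      (id0.mul hAb)).smul_const (B u))
    refine ((hasDerivAt_pdv (smooth_differentiable hQsm (u, 0))).unique h).trans ?_
    simp [hA0, hAb0]
  have hαvvv : pdv (pdv (pdv α)) (u, 0) = a u • N u + b u • B u := by
    rw [pdv_pdv_pdv_normal_form hQsm hαsm hαQ, hQv]
    module
  have hαuv : ∀ u, pdv (pdu α) (u, 0) = deriv T u := fun u => by
    rw [pdv_pdu_comm hαsm, pdu_eq_deriv hv_sm hαv]
  have hαuu : pdu (pdu α) (u, 0) = deriv t u := pdu_eq_deriv hu_sm hαu u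
  have dt := fun u => (smooth_differentiable htsm u).hasDerivAt
  have dN := fun u => (smooth_differentiable hNsm u).hasDerivAt
  have dB := fun u => (smooth_differentiable hBsm u).hasDerivAt
  have hαuuv : pdv (pdu (pdu α)) (u, 0) =
      deriv (fun u => -(kg u) • t u - τN u • N u - τ u • B u) u := by
    rw [pdv_pdu_comm hu_sm, ← pdu_eq_deriv (contDiff_pdv hu_sm)]
    intro u
    rw [hαuv, hDT]
  have hαuvv : pdv (pdv (pdu α)) (u, 0) = deriv (fun u => K u • N u + Kb u • B u) u := by
    rw [pdv_pdu_comm hαsm, pdv_pdu_comm hv_sm, pdu_eq_deriv (contDiff_pdv hv_sm) hαvv]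
  replace hαuuv := hαuuv.trans
    ((((smooth_differentiable hkgsm u).hasDerivAt.neg.smul (dt u)).sub
    ((smooth_differentiable hτNsm u).hasDerivAt.smul (dN u))).sub
    ((smooth_differentiable hτsm u).hasDerivAt.smul (dB u))).deriv
  replace hαuvv := hαuvv.trans
    (((smooth_differentiable hKsm u).hasDerivAt.smul (dN u)).add
    ((smooth_differentiable hKbsm u).hasDerivAt.smul (dB u))).deriv
  have hB1sm : ContDiff ℝ (⊤ : ℕ∞) (Bb1 α t T N) := by
    have fst_sm : ∀ {X : ℝ → E4}, ContDiff ℝ (⊤ : ℕ∞) X →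
        ContDiff ℝ (⊤ : ℕ∞) (fun p : ℝ × ℝ => X p.1) := fun h => h.comp contDiff_fst
    have hx1 := hu_sm.inner ℝ (fst_sm htsm)
    have hx2 := hu_sm.inner ℝ (fst_sm hTsm)
    have hx3 := hu_sm.inner ℝ (fst_sm hNsm)
    have hy1 := hv_sm.inner ℝ (fst_sm hNsm)
    exact ((((hy1.mul hx2).sub hx3).smul (fst_sm htsm)).sub
      ((hx1.mul hy1).smul (fst_sm hTsm))).add (hx1.smul (fst_sm hNsm))
  have hB2sm : ContDiff ℝ (⊤ : ℕ∞) (Bb2 α t T N) := contDiff_wedge hu_sm hv_sm hB1sm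
  have hB1 : Bb1 α t T N (u, 0) = N u := by
    simp only [Bb1, x1, x2, x3, y1, hαu, hαv, tt, tT, tN, TN]
    module
  have hB2 : Bb2 α t T N (u, 0) = B u := by
    rw [Bb2, hαu, hαv, hB1]
    exact wedge_frame hO (hdet u)
  have hBnorm : ‖B u‖ = 1 := by
    rw [← sq_eq_sq₀ (norm_nonneg _) zero_le_one, ← real_inner_self_eq_norm_sq, BB]; norm_num
  have hB2ne : Bb2 α t T N (u, 0) ≠ 0 := by
    rw [hB2, ← norm_ne_zero_iff, hBnorm]; exact one_ne_zero
  have hN2 : N2 α t T N (u, 0) = B u := by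
    simp [N2, hB2, hBnorm]
  have hN2d : DifferentiableAt ℝ (N2 α t T N) (u, 0) := by
    have hd := smooth_differentiable hB2sm (u, 0)
    exact ((hd.norm ℝ hB2ne).inv (norm_ne_zero_iff.2 hB2ne)).smul hd
  -- The components of `n = ∂_v N₂` in the Darboux frame.
  obtain ⟨n, hn⟩ : ∃ n, pdv (N2 α t T N) (u, 0) = n := ⟨_, rfl⟩
  have nt : ⟪n, t u⟫ = τ u := by
    have h := pdv_inner hN2d (smooth_differentiable hu_sm (u, 0))
    rw [pdv_eq_of_eventually_const (r := 0) (.of_forall fun q => by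
      simp only [N2, Bb2, inner_smul_left, wedge_orth_left, mul_zero])] at h
    rw [hN2, hn, hαuv, hαu, hDT] at h
    simp only [inner_sub_right, inner_smul_right, real_inner_comm (t u) (B u),
      real_inner_comm (N u) (B u), tB, NB, BB] at h
    linarith
  have nT : ⟪n, T u⟫ = -Kb u := by
    have h := pdv_inner hN2d (smooth_differentiable hv_sm (u, 0))
    rw [pdv_eq_of_eventually_const (r := 0) (.of_forall fun q => by
      simp only [N2, Bb2, inner_smul_left, wedge_orth_mid, mul_zero])] at h
    rw [hN2, hn, hαvv, hαv] at h
    simp only [inner_add_right, inner_smul_right, real_inner_comm (N u) (B u), NB, BB] at h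
    linarith
  have nN : ⟪n, N u⟫ = (0 : ℝ) := by
    have h := pdv_inner hN2d (smooth_differentiable hB1sm (u, 0))
    rw [pdv_eq_of_eventually_const (r := 0) (.of_forall fun q => by
      simp only [N2, Bb2, inner_smul_left, wedge_orth_right, mul_zero])] at h
    have h' := pdv_inner (f := fun q : ℝ × ℝ => B q.1) (p := (u, 0))
      ((smooth_differentiable hBsm).comp differentiable_fst _)
      (smooth_differentiable hB1sm (u, 0))
    rw [pdv_eq_of_eventually_const (r := 0) (.of_forall fun q => by
      obtain ⟨-, -, -, -, -, -, h1, -, h2, h3⟩ := hortho q.1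
      rw [real_inner_comm] at h1 h2 h3
      simp only [Bb1, inner_add_right, inner_sub_right, inner_smul_right, h1, h2, h3]
      ring), pdv_comp_fst (smooth_differentiable hBsm), inner_zero_left] at h'
    rw [hN2, hn, hB1] at h
    linarith
  have nB : ⟪n, B u⟫ = (0 : ℝ) := by
    have h := pdv_inner hN2d hN2d
    rw [pdv_eq_of_eventually_const (r := 1), hN2, hn, real_inner_comm] at h
    · linarith
    -- `|N₂| = 1` holds only where `B̄₂ ≠ 0`, hence near `(u, 0)`.
    · filter_upwards [hB2sm.continuous.continuousAt.eventually_ne hB2ne] with q hq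
      have hq' : ‖Bb2 α t T N q‖ ≠ 0 := norm_ne_zero_iff.2 hq
      rw [real_inner_self_eq_norm_sq, N2, norm_smul, norm_inv, norm_norm, inv_mul_cancel₀ hq',
        one_pow]
  have tn := (real_inner_comm (t u) n).symm.trans nt
  have Tn := (real_inner_comm (T u) n).symm.trans nT
  have Nn := (real_inner_comm (N u) n).symm.trans nN
  have Bn := (real_inner_comm (B u) n).symm.trans nB
  refine ⟨?_, ?_, ?_⟩
  · have h := pdv_inner (smooth_differentiable (contDiff_pdu hu_sm) (u, 0)) hN2d
    refine h.trans ?_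
    rw [hN2, hn, hαuu, hαuuv, hDt, hDN, hDB]
    simp only [inner_add_left, inner_sub_left, inner_smul_left, Tn, Nn, Bn, tB, TB, NB, BB,
      RCLike.conj_to_real, Pi.neg_apply]
    ring
  · have h := pdv_inner (smooth_differentiable (contDiff_pdv hu_sm) (u, 0)) hN2d
    refine h.trans ?_
    rw [hN2, hn, hαuv, hαuvv, hDT, hDN, hDB]
    simp only [inner_add_left, inner_sub_left, inner_smul_left, tn, Nn, Bn, tB, TB, NB, BB,
      RCLike.conj_to_real]
    ring
  · have h := pdv_inner (smooth_differentiable (contDiff_pdv hv_sm) (u, 0)) hN2d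
    refine h.trans ?_
    rw [hN2, hn, hαvv, hαvvv]
    simp only [inner_add_left, inner_smul_left, Nn, Bn, NB, BB, RCLike.conj_to_real]
    ring
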